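/- Let N ≥ 1 and k ≥ 1 be integers, let Ω ⊆ ℝ^N be open, and let u : Ω → ℝ be smooth. Then on Ω, Δ^k( |x|²·u ) = |x|²·Δ^k u + 2k · Δ^{k−1}( (N − 2k + 2)·u + 2⟨x, ∇u⟩ ). -/

import Mathlib

/-!
Multiplication by `|x|²`, the Laplacian and the Euler operator `E f(x) = Df(x) x` satisfy the
`sl(2)` relations `[Δ, |x|²] = 2N + 4E` and `[Δ, E] = 2Δ`. Both are instances of the product rule
`Δ B(f, g) = B(Δf, g) + 2 ∑ᵢ B(∂ᵢf, ∂ᵢg) + B(f, Δg)`, for `|x|² · f` and for the pairing of `Df`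
with the identity map. The identity for `Δᵏ` follows by induction on `k`.
-/

/-- The Euclidean Laplacian `Δu = ∑ i, ∂²u/∂xᵢ²` of a function on `ℝᴺ`. -/
noncomputable def lap {N : ℕ} (f : EuclideanSpace ℝ (Fin N) → ℝ)
    (x : EuclideanSpace ℝ (Fin N)) : ℝ :=
  ∑ i, fderiv ℝ (fun y => fderiv ℝ f y (EuclideanSpace.single i 1)) x
    (EuclideanSpace.single i 1)

/-- The Euler (radial) operator `Eu(x) = ⟨x, ∇u(x)⟩ = ∑ i, xᵢ ∂u/∂xᵢ`. -/
noncomputable def eulerOp {N : ℕ} (f : EuclideanSpace ℝ (Fin N) → ℝ)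
    (x : EuclideanSpace ℝ (Fin N)) : ℝ :=
  ∑ i, x i * fderiv ℝ f x (EuclideanSpace.single i 1)

open Filter InnerProductSpace Laplacian Module
open scoped Topology

section RadialDerivative

variable {E F : Type*} [NormedAddCommGroup E] [NormedSpace ℝ E]
  [NormedAddCommGroup F] [NormedSpace ℝ F] {f g : E → F} {x : E} {n : WithTop ℕ∞}

/-- The Euler operator `f ↦ (x ↦ Df(x) x)` on a normed space; on `ℝᴺ` this is `⟨x, ∇f(x)⟩`. -/
noncomputable def radialDeriv (f : E → F) (x : E) : F := fderiv ℝ f x x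

theorem contDiffAt_radialDeriv (hf : ContDiffAt ℝ (n + 1) f x) :
    ContDiffAt ℝ n (radialDeriv f) x :=
  (hf.fderiv_right le_rfl).clm_apply contDiffAt_id

theorem fderiv_fderiv_fderiv_swap_right (hf : ContDiffAt ℝ 3 f x) (a b c : E) :
    fderiv ℝ (fderiv ℝ (fderiv ℝ f)) x a b c = fderiv ℝ (fderiv ℝ (fderiv ℝ f)) x a c b := by
  have hd : DifferentiableAt ℝ (fderiv ℝ (fderiv ℝ f)) x :=
    ((hf.fderiv_right (m := 2) (by norm_num)).fderiv_right (m := 1) (by norm_num)).differentiableAt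
      one_ne_zero
  have hsymm : (fun y => fderiv ℝ (fderiv ℝ f) y b c) =ᶠ[𝓝 x]
      fun y => fderiv ℝ (fderiv ℝ f) y c b := by
    filter_upwards [hf.eventually (by simp)] with y hy
    exact hy.isSymmSndFDerivAt (by simp; norm_num) b c
  have hderiv (b c : E) : fderiv ℝ (fun y => fderiv ℝ (fderiv ℝ f) y b c) x a =
      fderiv ℝ (fderiv ℝ (fderiv ℝ f)) x a b c := by
    rw [fderiv_clm_apply (hd.clm_apply (differentiableAt_const b)) (differentiableAt_const c),
      fderiv_clm_apply hd (differentiableAt_const b)]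
    simp
  rw [← hderiv, ← hderiv, hsymm.fderiv_eq]

end RadialDerivative

section Laplacian

variable {E F G H ι : Type*} [NormedAddCommGroup E] [InnerProductSpace ℝ E] [FiniteDimensional ℝ E]
  [NormedAddCommGroup F] [NormedSpace ℝ F] [NormedAddCommGroup G] [NormedSpace ℝ G]
  [NormedAddCommGroup H] [NormedSpace ℝ H] [Fintype ι]
  {f g : E → F} {x : E} {n : WithTop ℕ∞}

theorem laplacian_eq_sum_fderiv_fderiv (v : OrthonormalBasis ι ℝ E) (f : E → F) :
    Δ f = fun x => ∑ i, fderiv ℝ (fderiv ℝ f) x (v i) (v i) := by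
  simp [laplacian_eq_iteratedFDeriv_orthonormalBasis f v, iteratedFDeriv_two_apply]

theorem contDiffAt_laplacian (hf : ContDiffAt ℝ (n + 2) f x) : ContDiffAt ℝ n (Δ f) x := by
  rw [laplacian_eq_sum_fderiv_fderiv (stdOrthonormalBasis ℝ E)]
  have hD : ContDiffAt ℝ n (fderiv ℝ (fderiv ℝ f)) x :=
    (hf.fderiv_right (m := n + 1) (by rw [add_assoc, one_add_one_eq_two])).fderiv_right le_rfl
  exact ContDiffAt.sum fun i _ => (hD.clm_apply contDiffAt_const).clm_apply contDiffAt_const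

theorem laplacian_bilinear (B : F →L[ℝ] G →L[ℝ] H) {f : E → F} {g : E → G}
    (hf : ContDiffAt ℝ 2 f x) (hg : ContDiffAt ℝ 2 g x) (v : OrthonormalBasis ι ℝ E) :
    Δ (fun y => B (f y) (g y)) x = B (Δ f x) (g x) +
      (2 : ℝ) • ∑ i, B (fderiv ℝ f x (v i)) (fderiv ℝ g x (v i)) + B (f x) (Δ g x) := by
  have hDf : DifferentiableAt ℝ (fderiv ℝ f) x :=
    (hf.fderiv_right (m := 1) (by norm_num)).differentiableAt one_ne_zero
  have hDg : DifferentiableAt ℝ (fderiv ℝ g) x :=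
    (hg.fderiv_right (m := 1) (by norm_num)).differentiableAt one_ne_zero
  have hfx := hf.differentiableAt two_ne_zero
  have hgx := hg.differentiableAt two_ne_zero
  have hfirst : fderiv ℝ (fun y => B (f y) (g y)) =ᶠ[𝓝 x] fun y =>
      B.precompR E (f y) (fderiv ℝ g y) + B.precompL E (fderiv ℝ f y) (g y) := by
    filter_upwards [hf.eventually (by simp), hg.eventually (by simp)] with y hfy hgy
    exact B.fderiv_of_bilinear (hfy.differentiableAt two_ne_zero) (hgy.differentiableAt two_ne_zero)
  have hsecond (w : E) : fderiv ℝ (fderiv ℝ fun y => B (f y) (g y)) x w w =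
      B (fderiv ℝ (fderiv ℝ f) x w w) (g x) + (2 : ℝ) • B (fderiv ℝ f x w) (fderiv ℝ g x w) +
        B (f x) (fderiv ℝ (fderiv ℝ g) x w w) := by
    rw [hfirst.fderiv_eq, fderiv_fun_add
      ((B.precompR E).hasFDerivAt_of_bilinear hfx.hasFDerivAt hDg.hasFDerivAt).differentiableAt
      ((B.precompL E).hasFDerivAt_of_bilinear hDf.hasFDerivAt hgx.hasFDerivAt).differentiableAt,
      (B.precompR E).fderiv_of_bilinear hfx hDg, (B.precompL E).fderiv_of_bilinear hDf hgx]
    simp only [add_apply, ContinuousLinearMap.precompR_apply,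
      ContinuousLinearMap.precompL_apply, ContinuousLinearMap.compL_apply,
      ContinuousLinearMap.comp_apply]
    module
  simp only [laplacian_eq_sum_fderiv_fderiv v, hsecond, Finset.sum_add_distrib, map_sum,
    sum_apply, Finset.smul_sum]

theorem fderiv_laplacian_apply (hf : ContDiffAt ℝ 3 f x) (w : E) :
    fderiv ℝ (Δ f) x w = Δ (fderiv ℝ f) x w := by
  let v := stdOrthonormalBasis ℝ E
  have hDf : ContDiffAt ℝ 2 (fderiv ℝ f) x := hf.fderiv_right (by norm_num)
  have hD : DifferentiableAt ℝ (fderiv ℝ (fderiv ℝ f)) x :=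
    (hDf.fderiv_right (m := 1) (by norm_num)).differentiableAt one_ne_zero
  have hDD (e : E) : DifferentiableAt ℝ (fun y => fderiv ℝ (fderiv ℝ f) y e) x :=
    hD.clm_apply (differentiableAt_const e)
  have hsymm (e : E) : fderiv ℝ (fderiv ℝ (fderiv ℝ f)) x w e e =
      fderiv ℝ (fderiv ℝ (fderiv ℝ f)) x e e w := by
    rw [hDf.isSymmSndFDerivAt (by simp) w e, fderiv_fderiv_fderiv_swap_right hf]
  rw [laplacian_eq_sum_fderiv_fderiv v f, laplacian_eq_sum_fderiv_fderiv v (fderiv ℝ f),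
    fderiv_fun_sum fun i _ => (hDD (v i)).clm_apply (differentiableAt_const _)]
  simp [← hsymm, fderiv_clm_apply (hDD _) (differentiableAt_const _),
    fderiv_clm_apply hD (differentiableAt_const _)]

theorem laplacian_continuousLinearMap (L : E →L[ℝ] F) : Δ (L : E → F) = 0 := by
  have hL : fderiv ℝ L = fun _ => L := funext fun _ => L.fderiv
  ext x
  simp [laplacian_eq_sum_fderiv_fderiv (stdOrthonormalBasis ℝ E), hL]

theorem laplacian_radialDeriv (hf : ContDiffAt ℝ 3 f x) :
    Δ (radialDeriv f) x = radialDeriv (Δ f) x + (2 : ℝ) • Δ f x := by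
  let v := stdOrthonormalBasis ℝ E
  have hprod := laplacian_bilinear (.id ℝ (E →L[ℝ] F)) (hf.fderiv_right (m := 2) (by norm_num))
    contDiffAt_id v
  have htrace : Δ f x = ∑ i, fderiv ℝ (fderiv ℝ f) x (v i) (v i) := by
    rw [laplacian_eq_sum_fderiv_fderiv v]
  have hfun : radialDeriv f = fun y => fderiv ℝ f y y := rfl
  rw [hfun, radialDeriv, fderiv_laplacian_apply hf, htrace]
  simpa [show Δ (id : E → E) = 0 from laplacian_continuousLinearMap (.id ℝ E)] using hprod

theorem laplacian_normSq : Δ (fun y : E => ‖y‖ ^ 2) x = 2 * finrank ℝ E := by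
  have hid : Δ (id : E → E) = 0 := laplacian_continuousLinearMap (.id ℝ E)
  let B : E →L[ℝ] E →L[ℝ] ℝ := innerSL ℝ
  have hB (y z : E) : B y z = inner ℝ y z := rfl
  have hnormSq : (fun y : E => ‖y‖ ^ 2) = fun y => B (id y) (id y) := by simp [hB]
  rw [hnormSq, laplacian_bilinear B contDiffAt_id contDiffAt_id (stdOrthonormalBasis ℝ E)]
  simp [hid, hB]

theorem laplacian_normSq_smul (hf : ContDiffAt ℝ 2 f x) :
    Δ (fun y => ‖y‖ ^ 2 • f y) x =
      ‖x‖ ^ 2 • Δ f x + ((2 * finrank ℝ E : ℝ) • f x + (4 : ℝ) • radialDeriv f x) := by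
  let v := stdOrthonormalBasis ℝ E
  have hprod := laplacian_bilinear (.lsmul ℝ ℝ) (contDiff_norm_sq ℝ).contDiffAt hf v
  have hgrad : ∑ i, fderiv ℝ (fun y : E => ‖y‖ ^ 2) x (v i) • fderiv ℝ f x (v i) =
      (2 : ℝ) • radialDeriv f x := by
    rw [radialDeriv]
    nth_rw 4 [← v.sum_repr' x]
    simp [Finset.smul_sum, real_inner_comm, two_smul, add_smul]
  simp only [ContinuousLinearMap.lsmul_apply, laplacian_normSq, hgrad] at hprod
  rw [hprod]
  module

theorem laplacian_iterate_congr (k : ℕ) (h : f =ᶠ[𝓝 x] g) :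
    laplacian^[k] f =ᶠ[𝓝 x] laplacian^[k] g := by
  induction k generalizing f g with
  | zero => exact h
  | succ _ ih => exact ih (laplacian_congr_nhds h)

theorem contDiffAt_laplacian_iterate {n k : ℕ} (hf : ContDiffAt ℝ (n + 2 * k : ℕ) f x) :
    ContDiffAt ℝ n (laplacian^[k] f) x := by
  induction k generalizing f with
  | zero => exact hf
  | succ k ih => exact ih (contDiffAt_laplacian hf)

theorem laplacian_iterate_add {k : ℕ} (hf : ContDiffAt ℝ (2 * k : ℕ) f x)
    (hg : ContDiffAt ℝ (2 * k : ℕ) g x) :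
    laplacian^[k] (f + g) x = laplacian^[k] f x + laplacian^[k] g x := by
  induction k generalizing f g with
  | zero => rfl
  | succ k ih =>
    have htwo : (2 : WithTop ℕ∞) ≤ (2 * (k + 1) : ℕ) := by norm_cast; lia
    have hadd : Δ (f + g) =ᶠ[𝓝 x] Δ f + Δ g := (hf.of_le htwo).laplacian_add_nhds (hg.of_le htwo)
    exact (laplacian_iterate_congr k hadd).eq_of_nhds.trans
      (ih (contDiffAt_laplacian hf) (contDiffAt_laplacian hg))

theorem laplacian_iterate_const_smul {k : ℕ} (c : ℝ) (hf : ContDiffAt ℝ (2 * k : ℕ) f x) :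
    laplacian^[k] (c • f) x = c • laplacian^[k] f x := by
  induction k generalizing f with
  | zero => rfl
  | succ k ih =>
    have hsmul : Δ (c • f) =ᶠ[𝓝 x] c • Δ f :=
      laplacian_smul_nhds c (hf.of_le (by norm_cast; lia))
    exact (laplacian_iterate_congr k hsmul).eq_of_nhds.trans (ih (contDiffAt_laplacian hf))

theorem laplacian_iterate_smul_add_smul {k : ℕ} (a b : ℝ) (hf : ContDiffAt ℝ (2 * k : ℕ) f x)
    (hg : ContDiffAt ℝ (2 * k : ℕ) g x) :
    laplacian^[k] (a • f + b • g) x = a • laplacian^[k] f x + b • laplacian^[k] g x := by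
  have haf : ContDiffAt ℝ (2 * k : ℕ) (a • f) x := hf.const_smul a
  have hbg : ContDiffAt ℝ (2 * k : ℕ) (b • g) x := hg.const_smul b
  rw [laplacian_iterate_add haf hbg, laplacian_iterate_const_smul a hf,
    laplacian_iterate_const_smul b hg]

theorem laplacian_iterate_radialDeriv_laplacian {k : ℕ}
    (hf : ContDiffAt ℝ (2 * k + 3 : ℕ) f x) :
    laplacian^[k] (radialDeriv (Δ f)) x =
      laplacian^[k + 1] (radialDeriv f) x - (2 : ℝ) • laplacian^[k + 1] f x := by
  have hcomm : Δ (radialDeriv f) =ᶠ[𝓝 x] radialDeriv (Δ f) + (2 : ℝ) • Δ f := by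
    have hf₃ : ContDiffAt ℝ 3 f x := hf.of_le (by norm_cast; lia)
    filter_upwards [hf₃.eventually (by simp)] with y hy using laplacian_radialDeriv hy
  have hΔ : ContDiffAt ℝ (2 * k + 1 : ℕ) (Δ f) x := contDiffAt_laplacian hf
  have hΔ' : ContDiffAt ℝ (2 * k : ℕ) (Δ f) x := hΔ.of_le (by norm_cast; lia)
  have h2Δ : ContDiffAt ℝ (2 * k : ℕ) ((2 : ℝ) • Δ f) x := hΔ'.const_smul 2
  rw [Function.iterate_succ_apply, Function.iterate_succ_apply,
    (laplacian_iterate_congr k hcomm).eq_of_nhds,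
    laplacian_iterate_add (contDiffAt_radialDeriv hΔ) h2Δ,
    laplacian_iterate_const_smul _ hΔ', add_sub_cancel_right]

theorem laplacian_iterate_succ_normSq_smul {k : ℕ} (hf : ContDiffAt ℝ (2 * (k + 1) : ℕ) f x) :
    laplacian^[k + 1] (fun y => ‖y‖ ^ 2 • f y) x =
      ‖x‖ ^ 2 • laplacian^[k + 1] f x + (2 * (k + 1) : ℝ) •
        ((finrank ℝ E - 2 * k : ℝ) • laplacian^[k] f x +
          (2 : ℝ) • laplacian^[k] (radialDeriv f) x) := by
  induction k generalizing f with
  | zero =>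
    simp only [zero_add, Function.iterate_one, Function.iterate_zero_apply,
      laplacian_normSq_smul hf]
    module
  | succ k ih =>
    have hcomm : Δ (fun y => ‖y‖ ^ 2 • f y) =ᶠ[𝓝 x] (fun y => ‖y‖ ^ 2 • Δ f y) +
        ((2 * finrank ℝ E : ℝ) • f + (4 : ℝ) • radialDeriv f) := by
      have hf₂ : ContDiffAt ℝ 2 f x := hf.of_le (by norm_cast; lia)
      filter_upwards [hf₂.eventually (by simp)] with y hy using laplacian_normSq_smul hy
    have hΔ : ContDiffAt ℝ (2 * (k + 1) : ℕ) (Δ f) x := contDiffAt_laplacian hf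
    have hf' : ContDiffAt ℝ (2 * (k + 1) : ℕ) f x := hf.of_le (by norm_cast; lia)
    have hE : ContDiffAt ℝ (2 * (k + 1) : ℕ) (radialDeriv f) x :=
      contDiffAt_radialDeriv (hf.of_le (by norm_cast; lia))
    have hnormSq : ContDiffAt ℝ (2 * (k + 1) : ℕ) (fun y => ‖y‖ ^ 2 • Δ f y) x :=
      (contDiff_norm_sq ℝ).contDiffAt.smul hΔ
    have hlin : ContDiffAt ℝ (2 * (k + 1) : ℕ)
        ((2 * finrank ℝ E : ℝ) • f + (4 : ℝ) • radialDeriv f) x :=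
      (hf'.const_smul _).add (hE.const_smul _)
    rw [Function.iterate_succ_apply, (laplacian_iterate_congr (k + 1) hcomm).eq_of_nhds,
      laplacian_iterate_add hnormSq hlin,
      laplacian_iterate_smul_add_smul _ _ hf' hE, ih hΔ,
      laplacian_iterate_radialDeriv_laplacian (hf.of_le (by norm_cast; lia))]
    simp only [← Function.iterate_succ_apply]
    push_cast
    module

theorem laplacian_pow_comm_normSq_general {k : ℕ} (hk : 1 ≤ k)
    (hf : ContDiffAt ℝ (2 * k : ℕ) f x) :
    laplacian^[k] (fun y => ‖y‖ ^ 2 • f y) x =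
      ‖x‖ ^ 2 • laplacian^[k] f x + (2 * k : ℝ) • laplacian^[k - 1]
        (fun y => (finrank ℝ E - 2 * k + 2 : ℝ) • f y + (2 : ℝ) • radialDeriv f y) x := by
  obtain ⟨m, rfl⟩ := Nat.exists_eq_add_of_le' hk
  have hf' : ContDiffAt ℝ (2 * m : ℕ) f x := hf.of_le (by norm_cast; lia)
  have hE : ContDiffAt ℝ (2 * m : ℕ) (radialDeriv f) x :=
    contDiffAt_radialDeriv (hf.of_le (by norm_cast; lia))
  have hcoeff : (finrank ℝ E - 2 * (m + 1 : ℕ) + 2 : ℝ) = finrank ℝ E - 2 * m := by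
    push_cast
    ring
  rw [laplacian_iterate_succ_normSq_smul hf, ← laplacian_iterate_smul_add_smul _ _ hf' hE, hcoeff,
    Nat.cast_succ, Nat.add_sub_cancel]
  rfl

end Laplacian

section Coordinates

variable {N : ℕ} {f g : EuclideanSpace ℝ (Fin N) → ℝ} {x : EuclideanSpace ℝ (Fin N)}

theorem eulerOp_eq_radialDeriv (f : EuclideanSpace ℝ (Fin N) → ℝ) : eulerOp f = radialDeriv f := by
  ext x
  have hx := congrArg (fderiv ℝ f x) ((EuclideanSpace.basisFun (Fin N) ℝ).sum_repr x)
  simpa [eulerOp, radialDeriv] using hx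

theorem lap_congr (h : f =ᶠ[𝓝 x] g) : lap f x = lap g x := by
  have hpartial (w : EuclideanSpace ℝ (Fin N)) :
      (fun y => fderiv ℝ f y w) =ᶠ[𝓝 x] fun y => fderiv ℝ g y w := by
    filter_upwards [h.fderiv (𝕜 := ℝ)] with y hy
    rw [hy]
  simp only [lap, (hpartial _).fderiv_eq]

theorem lap_eq_laplacian (hf : ContDiffAt ℝ 2 f x) : lap f x = Δ f x := by
  have hD : DifferentiableAt ℝ (fderiv ℝ f) x :=
    (hf.fderiv_right (m := 1) (by norm_num)).differentiableAt one_ne_zero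
  simp [lap, laplacian_eq_sum_fderiv_fderiv (EuclideanSpace.basisFun (Fin N) ℝ),
    fderiv_clm_apply hD (differentiableAt_const _)]

theorem lap_iterate_eq_laplacian_iterate {k : ℕ} (hf : ContDiffAt ℝ (2 * k : ℕ) f x) :
    lap^[k] f x = laplacian^[k] f x := by
  induction k generalizing x with
  | zero => rfl
  | succ k ih =>
    have heq : lap^[k] f =ᶠ[𝓝 x] laplacian^[k] f := by
      filter_upwards [hf.eventually (ENat.natCast_ne_coe_top _)] with y hy
      exact ih (hy.of_le (by norm_cast; lia))
    have hreg : ContDiffAt ℝ 2 (laplacian^[k] f) x :=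
      contDiffAt_laplacian_iterate (n := 2) (hf.of_le (by norm_cast; lia))
    rw [Function.iterate_succ_apply', Function.iterate_succ_apply', lap_congr heq,
      lap_eq_laplacian hreg]

end Coordinates

/-- The commutator identity
`Δᵏ(|x|²u) = |x|²Δᵏu + 2k·Δ^{k-1}((N - 2k + 2)u + 2⟨x, ∇u⟩)`
underlying the first GJMS construction. -/
theorem laplacian_pow_comm_normSq
    (N k : ℕ) (hN : 1 ≤ N) (hk : 1 ≤ k)
    (Ω : Set (EuclideanSpace ℝ (Fin N))) (hΩ : IsOpen Ω)
    (u : EuclideanSpace ℝ (Fin N) → ℝ) (hu : ContDiffOn ℝ (⊤ : ℕ∞) u Ω) :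
    ∀ x ∈ Ω,
      lap^[k] (fun y => ‖y‖ ^ 2 * u y) x
        = ‖x‖ ^ 2 * lap^[k] u x
          + 2 * k * lap^[k - 1]
              (fun y => ((N : ℝ) - 2 * k + 2) * u y + 2 * eulerOp u y) x := by
  intro x hx
  have hux (n : ℕ) : ContDiffAt ℝ n u x :=
    (hu.contDiffAt (hΩ.mem_nhds hx)).of_le (by exact_mod_cast le_top)
  have hnormSq : ContDiffAt ℝ (2 * k : ℕ) (fun y => ‖y‖ ^ 2 * u y) x :=
    (contDiff_norm_sq ℝ).contDiffAt.mul (hux _)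
  have hradial : ContDiffAt ℝ (2 * (k - 1) : ℕ)
      (fun y => (N - 2 * k + 2 : ℝ) * u y + 2 * radialDeriv u y) x :=
    (contDiffAt_const.mul (hux _)).add (contDiffAt_const.mul (contDiffAt_radialDeriv (hux _)))
  rw [eulerOp_eq_radialDeriv, lap_iterate_eq_laplacian_iterate hnormSq,
    lap_iterate_eq_laplacian_iterate (hux _), lap_iterate_eq_laplacian_iterate hradial]
  simpa using laplacian_pow_comm_normSq_general hk (hux _)
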